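/- Let (W,{s,t}) be a Coxeter system of dihedral type I₂(m) with m = m_{s,t} < ∞, and let h be a pre-realization of W over an integral domain k. Let W′ be a reflection subgroup of W whose canonical generating set S′ = {s′, t′} has exactly two elements, let v be the order of s′t′, and assume v is finite and divides m. If binom(v,k)_{x(m/v)}(a_{s,t}, a_{t,s}) = 0 = binom(v,k)_{y(m/v)}(a_{s,t}, a_{t,s}) for all 1 ≤ k ≤ v−1, then h is an Abe realization for (W′,S′): for every reflection datum for (W′,S′), with Cartan pairings a_{s′,t′} = ⟨α_{s′}∨, α_{t′}⟩, one has binom(v,k)_x(a_{s′,t′}, a_{t′,s′}) = 0 = binom(v,k)_y(a_{s′,t′}, a_{t′,s′}) for all 1 ≤ k ≤ v−1. -/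

import Mathlib

/-!
Statement 11: in a finite dihedral Coxeter system `I₂(m)` with pre-realization `h`, if
`W'` is a rank-2 reflection subgroup with canonical generators `{s', t'}` and `v` is the
(finite) order of `s't'`, which divides `m`, and the `(m/v)`-twisted quantum binomial
coefficients vanish at `(a_{s,t}, a_{t,s})`, then `h` is an Abe realization for `(W', S')`.
-/

attribute [local instance] Classical.propDecidable

noncomputable section

namespace PaperStmt

/-- `ℤ[x,y]`. -/
abbrev A2 : Type := MvPolynomial (Fin 2) ℤ

/-- The variable `x`. -/
def varX : A2 := MvPolynomial.X 0

/-- The variable `y`. -/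
def varY : A2 := MvPolynomial.X 1

/-- The pair of two-colored quantum numbers `([n]_x, [n]_y)` for `n ∈ ℕ`. -/
def qPair : ℕ → A2 × A2
  | 0 => (0, 0)
  | 1 => (1, 1)
  | n + 2 =>
      (varX * (qPair (n + 1)).2 - (qPair n).1,
        varY * (qPair (n + 1)).1 - (qPair n).2)

/-- The two-colored quantum number `[n]_x`, `n ∈ ℤ` (the recursions of the paper, used in both
directions, force `[-n]_x = -[n]_x`). -/
def qX (n : ℤ) : A2 := if 0 ≤ n then (qPair n.toNat).1 else -(qPair (-n).toNat).1

/-- The two-colored quantum number `[n]_y`, `n ∈ ℤ`. -/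
def qY (n : ℤ) : A2 := if 0 ≤ n then (qPair n.toNat).2 else -(qPair (-n).toNat).2

/-- The `d`-twisted variable `x(d) = [d+1]_x − [d−1]_x`. -/
def twX (d : ℤ) : A2 := qX (d + 1) - qX (d - 1)

/-- The `d`-twisted variable `y(d) = [d+1]_y − [d−1]_y`. -/
def twY (d : ℤ) : A2 := qY (d + 1) - qY (d - 1)
/-- Substitution `x ↦ x(d), y ↦ y(d)` in `ℤ[x,y]`. -/
def twist (d : ℤ) (p : A2) : A2 := MvPolynomial.aeval ![twX d, twY d] p

/-- The two-colored quantum binomial coefficient `binom(n,j)_x`: the unique element of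
`ℤ[x,y]` whose product with `[1]_x [2]_x ⋯ [j]_x` is `[n]_x [n−1]_x ⋯ [n−j+1]_x`. -/
def qbinomX (n j : ℕ) : A2 :=
  if h : ∃ p : A2,
      p * ∏ i ∈ Finset.range j, qX ((i : ℤ) + 1) =
        ∏ i ∈ Finset.range j, qX ((n : ℤ) - (i : ℤ)) then
    h.choose
  else 0

/-- The two-colored quantum binomial coefficient `binom(n,j)_y`. -/
def qbinomY (n j : ℕ) : A2 :=
  if h : ∃ p : A2,
      p * ∏ i ∈ Finset.range j, qY ((i : ℤ) + 1) =
        ∏ i ∈ Finset.range j, qY ((n : ℤ) - (i : ℤ)) then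
    h.choose
  else 0

/-- Evaluation `p(a,b)` of `p ∈ ℤ[x,y]` in a commutative ring, at `x ↦ a`, `y ↦ b`. -/
def pev {k : Type*} [CommRing k] (a b : k) (p : A2) : k := MvPolynomial.aeval ![a, b] p
variable {B W : Type*} [Group W] {M : CoxeterMatrix B}

/-- A pre-realization of the Coxeter system `cs` over `k`: a `k`-module `V` with simple
coroots in `V` and simple roots in the dual `V* = Module.Dual k V`, such that the pairing of
each simple root with its coroot is `2`, the formula `s(v) = v − ⟨v, α_s⟩ α_s∨` defines a
representation `rep` of `W` on `V`, and each simple root is surjective onto `k`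
(Demazure surjectivity). -/
structure PreRealization (cs : CoxeterSystem M W) (k V : Type*)
    [CommRing k] [AddCommGroup V] [Module k V] where
  coroot : B → V
  root : B → Module.Dual k V
  rep : W →* Module.End k V
  root_coroot_eq_two : ∀ i : B, root i (coroot i) = 2
  rep_simple : ∀ (i : B) (v : V), rep (cs.simple i) v = v - root i v • coroot i
  root_surjective : ∀ i : B, Function.Surjective ⇑(root i)

variable {k V : Type*} [CommRing k] [AddCommGroup V] [Module k V] {cs : CoxeterSystem M W}

/-- The contragredient action of `W` on the dual `V*`. -/
def dAct (R : PreRealization cs k V) (w : W) (f : Module.Dual k V) : Module.Dual k V :=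
  f.comp (R.rep w⁻¹)

/-- The canonical (Deodhar–Dyer) generating set of a subset `A ⊆ W`:
`{t ∈ ℛ(W) : N(t) ∩ A = {t}}` where `N(x) = {r ∈ ℛ(W) : ℓ(xr) < ℓ(x)}`. -/
def canonicalGens (cs : CoxeterSystem M W) (A : Set W) : Set W :=
  {t : W | cs.IsReflection t ∧
    ({r : W | cs.IsReflection r ∧ cs.length (t * r) < cs.length t} ∩ A) = {t}}

/-- `W'` is a reflection subgroup: it is generated by the reflections it contains. -/
def IsReflectionSubgroup (cs : CoxeterSystem M W) (W' : Subgroup W) : Prop :=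
  W' = Subgroup.closure ((W' : Set W) ∩ {r : W | cs.IsReflection r})

/-- A reflection datum on a subset `A ⊆ W`: maps `w_•, r_•` with `t = w_t r_t w_t⁻¹` and
`ℓ(w_t r_t) > ℓ(w_t)` for all `t ∈ A`. -/
def IsReflectionDatum (cs : CoxeterSystem M W) (A : Set W) (wm : W → W) (rm : W → B) : Prop :=
  ∀ t ∈ A, t = wm t * cs.simple (rm t) * (wm t)⁻¹ ∧
    cs.length (wm t) < cs.length (wm t * cs.simple (rm t))

/-- The root `α_t = w_t · α_{r_t}` attached to `t` by a reflection datum. -/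
def datumRoot (R : PreRealization cs k V) (wm : W → W) (rm : W → B) (t : W) :
    Module.Dual k V :=
  dAct R (wm t) (R.root (rm t))

/-- The coroot `α_t∨ = w_t · α_{r_t}∨` attached to `t` by a reflection datum. -/
def datumCoroot (R : PreRealization cs k V) (wm : W → W) (rm : W → B) (t : W) : V :=
  R.rep (wm t) (R.coroot (rm t))

/-- The Cartan pairing `a_{t,t'} = ⟨α_t∨, α_{t'}⟩` attached to a reflection datum. -/
def cartan (R : PreRealization cs k V) (wm : W → W) (rm : W → B) (t t' : W) : k :=
  datumRoot R wm rm t' (datumCoroot R wm rm t)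

/-- The Cartan entry `a_{s,t} = ⟨α_s∨, α_t⟩` for simple reflections. -/
def cartanS (R : PreRealization cs k V) (s t : B) : k := R.root t (R.coroot s)

/-!
Write `ρ = st` and `d = m / v`. A canonical generator of `W'` is no longer than any nontrivial
rotation in `W'`; since `ρ ^ d ∈ W'` has length at most `2d`, this forces `s't' = ρ ^ (±d)`.

Conjugating so that `t'` becomes a simple reflection `r` turns `s'` into `ρ ^ (±d) r`, for which an
explicit root and coroot are available: the vectors `[n+1]_y α_s∨ − [n]_x α_t∨` form the orbits of
`α_s∨` and `α_t∨` under `ρ`, and pairing them with simple roots gives the twisted variables. A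
reflection determines its root and coroot up to mutually inverse scalars, so
`a_{s',t'} a_{t',s'} = x(d) y(d)`, and both Cartan entries vanish if `x(d)` and `y(d)` do.

Finally `binom(v,j)_x = x ^ e * Q(xy)` and `binom(v,j)_y = y ^ e * Q(xy)` for the same `e` and `Q`,
so over a domain their simultaneous vanishing depends only on the product of the two arguments and
on whether both arguments are zero.
-/

/-! ### Two-colored quantum numbers -/

lemma qX_natCast (n : ℕ) : qX n = (qPair n).1 := by simp [qX]

lemma qY_natCast (n : ℕ) : qY n = (qPair n).2 := by simp [qY]

lemma qX_neg (n : ℤ) : qX (-n) = -qX n := by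
  unfold qX
  rcases lt_trichotomy n 0 with hn | rfl | hn
  · rw [if_pos (by lia), if_neg (by lia), neg_neg]
  · simp [qPair]
  · rw [if_neg (by lia), if_pos (by lia), neg_neg]

lemma qY_neg (n : ℤ) : qY (-n) = -qY n := by
  unfold qY
  rcases lt_trichotomy n 0 with hn | rfl | hn
  · rw [if_pos (by lia), if_neg (by lia), neg_neg]
  · simp [qPair]
  · rw [if_neg (by lia), if_pos (by lia), neg_neg]

lemma qX_natCast_add_one (n : ℕ) : qX (n + 1) = varX * qY n - qX (n - 1) := by
  cases n with
  | zero => simp [qX, qY, qPair]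
  | succ n =>
    rw [show ((n + 1 : ℕ) : ℤ) + 1 = (n + 2 : ℕ) by push_cast; ring,
      show ((n + 1 : ℕ) : ℤ) - 1 = n by push_cast; ring,
      qX_natCast, qX_natCast, qY_natCast, qPair]

lemma qY_natCast_add_one (n : ℕ) : qY (n + 1) = varY * qX n - qY (n - 1) := by
  cases n with
  | zero => simp [qX, qY, qPair]
  | succ n =>
    rw [show ((n + 1 : ℕ) : ℤ) + 1 = (n + 2 : ℕ) by push_cast; ring,
      show ((n + 1 : ℕ) : ℤ) - 1 = n by push_cast; ring,
      qY_natCast, qY_natCast, qX_natCast, qPair]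

lemma qX_add_one (n : ℤ) : qX (n + 1) = varX * qY n - qX (n - 1) := by
  obtain ⟨m, rfl | rfl⟩ := n.eq_nat_or_neg
  · exact qX_natCast_add_one m
  · rw [show -(m : ℤ) + 1 = -(m - 1) by ring, show -(m : ℤ) - 1 = -(m + 1) by ring,
      qX_neg, qX_neg, qY_neg, qX_natCast_add_one]
    ring

lemma qY_add_one (n : ℤ) : qY (n + 1) = varY * qX n - qY (n - 1) := by
  obtain ⟨m, rfl | rfl⟩ := n.eq_nat_or_neg
  · exact qY_natCast_add_one m
  · rw [show -(m : ℤ) + 1 = -(m - 1) by ring, show -(m : ℤ) - 1 = -(m + 1) by ring,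
      qY_neg, qY_neg, qX_neg, qY_natCast_add_one]
    ring

lemma twX_neg (d : ℤ) : twX (-d) = twX d := by
  rw [twX, twX, show -d + 1 = -(d - 1) by ring, show -d - 1 = -(d + 1) by ring, qX_neg, qX_neg]
  ring

lemma twY_neg (d : ℤ) : twY (-d) = twY d := by
  rw [twY, twY, show -d + 1 = -(d - 1) by ring, show -d - 1 = -(d + 1) by ring, qY_neg, qY_neg]
  ring

lemma twX_natAbs (d : ℤ) : twX d.natAbs = twX d := by
  rcases d.natAbs_eq with h | h <;> rw [h] <;> simp [twX_neg]

lemma twY_natAbs (d : ℤ) : twY d.natAbs = twY d := by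
  rcases d.natAbs_eq with h | h <;> rw [h] <;> simp [twY_neg]

/-- The one-variable polynomial `P_n(z)` with `[n]_x = P_n(xy)` for odd `n` and
`[n]_x = x * P_n(xy)` for even `n`. -/
def quantumPoly : ℕ → Polynomial ℤ
  | 0 => 0
  | 1 => 1
  | n + 2 => Polynomial.X ^ (n % 2) * quantumPoly (n + 1) - quantumPoly n

/-- The substitution `z ↦ xy` from `ℤ[z]` to `ℤ[x,y]`. -/
def substXY : Polynomial ℤ →ₐ[ℤ] A2 := Polynomial.aeval (varX * varY)

lemma qPair_eq : ∀ n : ℕ, qPair n =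
    (varX ^ ((n + 1) % 2) * substXY (quantumPoly n), varY ^ ((n + 1) % 2) * substXY (quantumPoly n))
  | 0 => by simp [qPair, quantumPoly]
  | 1 => by simp [qPair, quantumPoly]
  | n + 2 => by
    have substXY_X : substXY Polynomial.X = varX * varY := by simp [substXY]
    rw [qPair, qPair_eq (n + 1), qPair_eq n, quantumPoly, map_sub, map_mul, map_pow, substXY_X]
    rcases Nat.mod_two_eq_zero_or_one n with hn | hn
    · rw [hn, show (n + 1) % 2 = 1 by lia, show (n + 1 + 1) % 2 = 0 by lia,
        show (n + 2 + 1) % 2 = 1 by lia]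
      ext1 <;> ring
    · rw [hn, show (n + 1) % 2 = 0 by lia, show (n + 1 + 1) % 2 = 1 by lia,
        show (n + 2 + 1) % 2 = 0 by lia]
      ext1 <;> ring

lemma qX_natCast_eq (n : ℕ) : qX n = varX ^ ((n + 1) % 2) * substXY (quantumPoly n) := by
  rw [qX_natCast, qPair_eq]

lemma qY_natCast_eq (n : ℕ) : qY n = varY ^ ((n + 1) % 2) * substXY (quantumPoly n) := by
  rw [qY_natCast, qPair_eq]

lemma qX_eq_qY_of_odd {n : ℤ} (hn : Odd n) : qX n = qY n := by
  have natCast_case (m : ℕ) (hm : Odd m) : qX m = qY m := by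
    rw [qX_natCast_eq, qY_natCast_eq, show (m + 1) % 2 = 0 by grind, pow_zero, pow_zero]
  obtain ⟨m, rfl | rfl⟩ := n.eq_nat_or_neg
  · exact natCast_case m (by exact_mod_cast hn)
  · rw [qX_neg, qY_neg, natCast_case m (by simpa using hn)]

lemma twX_eq_twY_of_even {d : ℤ} (hd : Even d) : twX d = twY d := by
  rw [twX, twY, qX_eq_qY_of_odd hd.add_one, qX_eq_qY_of_odd (hd.sub_odd odd_one)]

lemma pev_qPair_two_two (n : ℕ) :
    pev (2 : ℤ) 2 (qPair n).1 = n ∧ pev (2 : ℤ) 2 (qPair n).2 = n := by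
  induction n using Nat.twoStepInduction with
  | zero => simp [pev, qPair]
  | one => simp [pev, qPair]
  | more n ih₀ ih₁ =>
    simp only [pev] at ih₀ ih₁
    simp only [pev, qPair, varX, varY, map_sub, map_mul, MvPolynomial.aeval_X, ih₀, ih₁,
      Matrix.cons_val_zero, Matrix.cons_val_one]
    constructor <;> push_cast <;> ring

lemma qX_natCast_succ_ne_zero (n : ℕ) : qX (n + 1 : ℕ) ≠ 0 := fun h ↦ by
  have h_eval := (pev_qPair_two_two (n + 1)).1
  rw [← qX_natCast, h, pev, map_zero] at h_eval
  lia

lemma qY_natCast_succ_ne_zero (n : ℕ) : qY (n + 1 : ℕ) ≠ 0 := fun h ↦ by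
  have h_eval := (pev_qPair_two_two (n + 1)).2
  rw [← qY_natCast, h, pev, map_zero] at h_eval
  lia

/-! ### Two-colored quantum binomial coefficients -/

/-- The one-variable polynomial `Q(z)` with `binom(n,j)_x = x ^ e * Q(xy)` and
`binom(n,j)_y = y ^ e * Q(xy)`, encoded like `qbinomX`: it is zero if the division fails. -/
def quantumBinomPoly (n j : ℕ) : Polynomial ℤ :=
  if h : ∏ i ∈ Finset.range j, quantumPoly (i + 1) ∣ ∏ i ∈ Finset.range j, quantumPoly (n - i) then
    h.choose
  else 0

lemma sum_range_succ_add_one_mod_two (j : ℕ) :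
    ∑ i ∈ Finset.range j, (i + 1 + 1) % 2 = j / 2 := by
  induction j with
  | zero => rfl
  | succ j ih => rw [Finset.sum_range_succ, ih]; lia

lemma sum_range_sub_add_one_mod_two {n j : ℕ} (hj : j ≤ n) :
    ∑ i ∈ Finset.range j, (n - i + 1) % 2 = n / 2 - (n - j) / 2 := by
  induction j with
  | zero => simp
  | succ j ih => rw [Finset.sum_range_succ, ih (by lia)]; lia

section OneColor

variable {c : A2} {q : ℤ → A2}

lemma prod_range_add_one_eq (hq : ∀ n : ℕ, q n = c ^ ((n + 1) % 2) * substXY (quantumPoly n))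
    (j : ℕ) : ∏ i ∈ Finset.range j, q (i + 1) =
      c ^ (j / 2) * substXY (∏ i ∈ Finset.range j, quantumPoly (i + 1)) := by
  rw [← sum_range_succ_add_one_mod_two, ← Finset.prod_pow_eq_pow_sum, map_prod,
    ← Finset.prod_mul_distrib]
  refine Finset.prod_congr rfl fun i _ ↦ ?_
  rw [← hq, Nat.cast_succ]

lemma prod_range_sub_eq (hq : ∀ n : ℕ, q n = c ^ ((n + 1) % 2) * substXY (quantumPoly n))
    {n j : ℕ} (hj : j ≤ n) : ∏ i ∈ Finset.range j, q (n - i) =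
      c ^ (n / 2 - (n - j) / 2) * substXY (∏ i ∈ Finset.range j, quantumPoly (n - i)) := by
  rw [← sum_range_sub_add_one_mod_two hj, ← Finset.prod_pow_eq_pow_sum, map_prod,
    ← Finset.prod_mul_distrib]
  refine Finset.prod_congr rfl fun i hi ↦ ?_
  rw [← hq, Nat.cast_sub (by grind)]

/- The retraction `f` sends the variable `c` to `1` and the other one to `z`: it detects that a
division in `ℤ[x,y]` already takes place in `ℤ[z]`. -/
lemma dite_choose_eq_pow_mul_substXY
    (hq : ∀ n : ℕ, q n = c ^ ((n + 1) % 2) * substXY (quantumPoly n))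
    (hq₀ : ∀ n : ℕ, q (n + 1 : ℕ) ≠ 0) (f : A2 →ₐ[ℤ] Polynomial ℤ) (hfc : f c = 1)
    (hf : f (varX * varY) = Polynomial.X) {n j : ℕ} (hj : j ≤ n) :
    (if h : ∃ p : A2, p * ∏ i ∈ Finset.range j, q (i + 1) = ∏ i ∈ Finset.range j, q (n - i) then
      h.choose else 0) =
      c ^ (n / 2 - (n - j) / 2 - j / 2) * substXY (quantumBinomPoly n j) := by
  have hden : ∏ i ∈ Finset.range j, q (i + 1) ≠ 0 :=
    Finset.prod_ne_zero_iff.2 fun i _ ↦ by simpa using hq₀ i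
  have f_substXY (p : Polynomial ℤ) : f (substXY p) = p := by
    rw [substXY, ← Polynomial.aeval_algHom_apply, hf, Polynomial.aeval_X_left_apply]
  unfold quantumBinomPoly
  by_cases hdvd : ∏ i ∈ Finset.range j, quantumPoly (i + 1) ∣
      ∏ i ∈ Finset.range j, quantumPoly (n - i)
  · have hquot : c ^ (n / 2 - (n - j) / 2 - j / 2) * substXY hdvd.choose *
        ∏ i ∈ Finset.range j, q (i + 1) = ∏ i ∈ Finset.range j, q (n - i) := by
      have hpow : c ^ (n / 2 - (n - j) / 2) = c ^ (n / 2 - (n - j) / 2 - j / 2) * c ^ (j / 2) := by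
        rw [← pow_add, Nat.sub_add_cancel (by lia)]
      have hsubst : substXY (∏ i ∈ Finset.range j, quantumPoly (n - i)) =
          substXY (∏ i ∈ Finset.range j, quantumPoly (i + 1)) * substXY hdvd.choose := by
        rw [← map_mul, ← hdvd.choose_spec]
      rw [prod_range_add_one_eq hq, prod_range_sub_eq hq hj, hpow, hsubst]
      ring
    have hex : ∃ p : A2,
        p * ∏ i ∈ Finset.range j, q (i + 1) = ∏ i ∈ Finset.range j, q (n - i) := ⟨_, hquot⟩
    rw [dif_pos hex, dif_pos hdvd]
    exact mul_right_cancel₀ hden (hex.choose_spec.trans hquot.symm)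
  · rw [dif_neg, dif_neg hdvd, map_zero, mul_zero]
    rintro ⟨p, hp⟩
    rw [prod_range_add_one_eq hq, prod_range_sub_eq hq hj] at hp
    have hfp := congrArg f hp
    simp only [map_mul, map_pow, hfc, f_substXY, one_pow, one_mul] at hfp
    exact hdvd ⟨f p, by rw [← hfp, mul_comm]⟩

end OneColor

lemma qbinomX_eq {n j : ℕ} (hj : j ≤ n) : qbinomX n j =
    varX ^ (n / 2 - (n - j) / 2 - j / 2) * substXY (quantumBinomPoly n j) :=
  dite_choose_eq_pow_mul_substXY qX_natCast_eq qX_natCast_succ_ne_zero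
    (MvPolynomial.aeval ![1, Polynomial.X]) (by simp [varX]) (by simp [varX, varY]) hj

lemma qbinomY_eq {n j : ℕ} (hj : j ≤ n) : qbinomY n j =
    varY ^ (n / 2 - (n - j) / 2 - j / 2) * substXY (quantumBinomPoly n j) :=
  dite_choose_eq_pow_mul_substXY qY_natCast_eq qY_natCast_succ_ne_zero
    (MvPolynomial.aeval ![Polynomial.X, 1]) (by simp [varY]) (by simp [varX, varY]) hj

/-! ### Evaluation -/

section Evaluation

variable (a b : k)

lemma pev_qX_add_two (n : ℤ) :
    pev a b (qX (n + 2)) = a * pev a b (qY (n + 1)) - pev a b (qX n) := by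
  rw [show n + 2 = n + 1 + 1 by ring, qX_add_one, add_sub_cancel_right]
  simp [pev, varX]

lemma pev_qY_add_two (n : ℤ) :
    pev a b (qY (n + 2)) = b * pev a b (qX (n + 1)) - pev a b (qY n) := by
  rw [show n + 2 = n + 1 + 1 by ring, qY_add_one, add_sub_cancel_right]
  simp [pev, varY]

lemma pev_twX (d : ℤ) : pev a b (twX d) = pev a b (qX (d + 1)) - pev a b (qX (d - 1)) :=
  map_sub (MvPolynomial.aeval ![a, b]) _ _

lemma pev_twY (d : ℤ) : pev a b (twY d) = pev a b (qY (d + 1)) - pev a b (qY (d - 1)) :=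
  map_sub (MvPolynomial.aeval ![a, b]) _ _

lemma pev_twist (d : ℤ) (p : A2) :
    pev a b (twist d p) = pev (pev a b (twX d)) (pev a b (twY d)) p := by
  unfold pev twist
  rw [← AlgHom.comp_apply]
  congr 1
  ext i
  fin_cases i <;> simp

lemma pev_qbinomX {n j : ℕ} (hj : j ≤ n) : pev a b (qbinomX n j) =
    a ^ (n / 2 - (n - j) / 2 - j / 2) * Polynomial.aeval (a * b) (quantumBinomPoly n j) := by
  rw [qbinomX_eq hj]
  simp [pev, substXY, ← Polynomial.aeval_algHom_apply, varX, varY]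

lemma pev_qbinomY {n j : ℕ} (hj : j ≤ n) : pev a b (qbinomY n j) =
    b ^ (n / 2 - (n - j) / 2 - j / 2) * Polynomial.aeval (a * b) (quantumBinomPoly n j) := by
  rw [qbinomY_eq hj]
  simp [pev, substXY, ← Polynomial.aeval_algHom_apply, varX, varY]

variable {a b}

lemma pev_qbinom_eq_zero_of_mul_eq_mul [IsDomain k] {a' b' : k} (hmul : a' * b' = a * b)
    (hzero : a = 0 → b = 0 → a' = 0 ∧ b' = 0) {n j : ℕ} (hj : j ≤ n)
    (hX : pev a b (qbinomX n j) = 0) (hY : pev a b (qbinomY n j) = 0) :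
    pev a' b' (qbinomX n j) = 0 ∧ pev a' b' (qbinomY n j) = 0 := by
  rw [pev_qbinomX a b hj] at hX
  rw [pev_qbinomY a b hj] at hY
  rw [pev_qbinomX a' b' hj, pev_qbinomY a' b' hj, hmul]
  by_cases hQ : Polynomial.aeval (a * b) (quantumBinomPoly n j) = 0
  · simp [hQ]
  · have ha := (mul_eq_zero.1 hX).resolve_right hQ
    have hb := (mul_eq_zero.1 hY).resolve_right hQ
    obtain ⟨rfl, rfl⟩ := hzero (eq_zero_of_pow_eq_zero ha) (eq_zero_of_pow_eq_zero hb)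
    rw [eq_zero_of_pow_eq_zero ha] at ha
    simp [ha]

end Evaluation

/-! ### Rotations and reflections in a dihedral group -/

section Dihedral

/-- The rotation `ρ = st` of the dihedral group generated by the simple reflections `s` and `t`. -/
def rotation (cs : CoxeterSystem M W) (s t : B) : W := cs.simple s * cs.simple t

variable (cs : CoxeterSystem M W) (s t : B)

lemma rotation_zpow_mul_simple_right (n : ℤ) :
    rotation cs s t ^ n * cs.simple t = rotation cs s t ^ (n - 1) * cs.simple s := by
  rw [zpow_sub_one]
  simp [rotation, mul_assoc]

lemma simple_left_mul_rotation_zpow (n : ℤ) :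
    cs.simple s * rotation cs s t ^ n = rotation cs s t ^ (-n) * cs.simple s := by
  have hsemiconj : SemiconjBy (cs.simple s) (rotation cs s t) (rotation cs s t)⁻¹ := by
    simp [SemiconjBy, rotation, mul_assoc]
  rw [zpow_neg, ← inv_zpow]
  exact hsemiconj.zpow_right n

lemma simple_right_mul_rotation_zpow (n : ℤ) :
    cs.simple t * rotation cs s t ^ n = rotation cs s t ^ (-n) * cs.simple t := by
  have hsemiconj : SemiconjBy (cs.simple t) (rotation cs s t) (rotation cs s t)⁻¹ := by
    simp [SemiconjBy, rotation, mul_assoc]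
  rw [zpow_neg, ← inv_zpow]
  exact hsemiconj.zpow_right n

lemma rotation_zpow_mul_simple_mul_rotation_zpow_mul_simple (n m : ℤ) :
    rotation cs s t ^ n * cs.simple s * (rotation cs s t ^ m * cs.simple s) =
      rotation cs s t ^ (n - m) := by
  rw [mul_assoc, ← mul_assoc (cs.simple s), simple_left_mul_rotation_zpow, mul_assoc,
    cs.simple_mul_simple_self, mul_one, ← zpow_add, sub_eq_add_neg]

lemma rotation_zpow_two_mul_mul_simple (j : ℤ) : rotation cs s t ^ (2 * j) * cs.simple s =
    rotation cs s t ^ j * cs.simple s * (rotation cs s t ^ j)⁻¹ := by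
  rw [← zpow_neg, mul_assoc, simple_left_mul_rotation_zpow, neg_neg, ← mul_assoc, ← zpow_add,
    two_mul]

lemma rotation_zpow_two_mul_sub_one_mul_simple (j : ℤ) :
    rotation cs s t ^ (2 * j - 1) * cs.simple s =
      rotation cs s t ^ j * cs.simple t * (rotation cs s t ^ j)⁻¹ := by
  rw [← rotation_zpow_mul_simple_right, ← zpow_neg, mul_assoc, simple_right_mul_rotation_zpow,
    neg_neg, ← mul_assoc, ← zpow_add, two_mul]

lemma isReflection_rotation_zpow_mul_simple (n : ℤ) :
    cs.IsReflection (rotation cs s t ^ n * cs.simple s) := by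
  obtain ⟨j, rfl | rfl⟩ := n.even_or_odd'
  · exact ⟨_, _, rotation_zpow_two_mul_mul_simple cs s t j⟩
  · rw [show 2 * j + 1 = 2 * (j + 1) - 1 by ring]
    exact ⟨_, _, rotation_zpow_two_mul_sub_one_mul_simple cs s t (j + 1)⟩

lemma length_rotation_pow_le (n : ℕ) : cs.length (rotation cs s t ^ n) ≤ 2 * n := by
  induction n with
  | zero => simp
  | succ n ih =>
    have hrot : cs.length (rotation cs s t) ≤ 1 + 1 := by
      simpa only [rotation, cs.length_simple] using cs.length_mul_le (cs.simple s) (cs.simple t)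
    have hmul := cs.length_mul_le (rotation cs s t ^ n) (rotation cs s t)
    rw [pow_succ]
    lia

variable {s t}

lemma conj_rotation_zpow_eq_or (hdih : ∀ i : B, i = s ∨ i = t) (w : W) (e : ℤ) :
    w⁻¹ * rotation cs s t ^ e * w = rotation cs s t ^ e ∨
      w⁻¹ * rotation cs s t ^ e * w = rotation cs s t ^ (-e) := by
  have simple_conj (i : B) (n : ℤ) :
      cs.simple i * rotation cs s t ^ n * cs.simple i = rotation cs s t ^ (-n) := by
    rcases hdih i with rfl | rfl
    · simp [simple_left_mul_rotation_zpow]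
    · simp [simple_right_mul_rotation_zpow]
  induction w using cs.simple_induction_right with
  | one => simp
  | mul_simple_right w i ih =>
    rw [mul_inv_rev, cs.inv_simple, show cs.simple i * w⁻¹ * rotation cs s t ^ e *
      (w * cs.simple i) = cs.simple i * (w⁻¹ * rotation cs s t ^ e * w) * cs.simple i by group]
    rcases ih with ih | ih <;> rw [ih, simple_conj]
    · exact Or.inr rfl
    · exact Or.inl (by rw [neg_neg])

lemma wordProd_eq_rotation_zpow_or (hdih : ∀ i : B, i = s ∨ i = t) (ω : List B) :
    (∃ n : ℤ, cs.wordProd ω = rotation cs s t ^ n ∧ |2 * n| ≤ ω.length ∧ Even ω.length) ∨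
    ∃ n : ℤ, cs.wordProd ω = rotation cs s t ^ n * cs.simple s ∧
      |2 * n + 1| ≤ ω.length ∧ Odd ω.length := by
  induction ω using List.reverseRecOn with
  | nil => exact Or.inl ⟨0, by simp⟩
  | append_singleton ω i ih =>
    rw [cs.wordProd_append, cs.wordProd_singleton, List.length_append, List.length_singleton]
    push_cast
    rcases ih with ⟨n, hn, hbound, hparity⟩ | ⟨n, hn, hbound, hparity⟩ <;>
      rw [hn] <;> rw [abs_le] at hbound <;> rcases hdih i with rfl | rfl
    · exact Or.inr ⟨n, rfl, abs_le.2 (by lia), hparity.add_one⟩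
    · exact Or.inr ⟨n - 1, rotation_zpow_mul_simple_right cs s i n, abs_le.2 (by lia),
        hparity.add_one⟩
    · exact Or.inl ⟨n, by simp, abs_le.2 (by lia), hparity.add_one⟩
    · refine Or.inl ⟨n + 1, ?_, abs_le.2 (by lia), hparity.add_one⟩
      rw [zpow_add_one, mul_assoc, rotation]

lemma exists_eq_rotation_zpow_mul_simple (hdih : ∀ i : B, i = s ∨ i = t)
    {w : W} (hw : cs.IsReflection w) :
    ∃ n : ℤ, w = rotation cs s t ^ n * cs.simple s ∧ |2 * n + 1| ≤ cs.length w := by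
  obtain ⟨ω, hred, rfl⟩ := cs.exists_isReduced w
  rcases wordProd_eq_rotation_zpow_or cs hdih ω with ⟨_, _, _, heven⟩ | ⟨n, hn, hbound, _⟩
  · exact absurd hw.odd_length (by rwa [hred.eq, Nat.not_odd_iff_even])
  · exact ⟨n, hn, by rwa [hred.eq]⟩

end Dihedral

/-! ### Canonical generators -/

lemma mem_of_mem_canonicalGens {A : Set W} {w : W} (hw : w ∈ canonicalGens cs A) : w ∈ A :=
  (hw.2.ge (Set.mem_singleton w)).2

lemma length_le_of_mem_canonicalGens {W' : Subgroup W} {w g : W}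
    (hw : w ∈ canonicalGens cs (W' : Set W)) (hg : g ∈ W') (hg₁ : g ≠ 1)
    (hwg : cs.IsReflection (w * g)) : cs.length w ≤ cs.length g := by
  by_contra! hlt
  have hinv : w * g ∈ ({w} : Set W) := by
    rw [← hw.2]
    refine ⟨⟨hwg, ?_⟩, W'.mul_mem (mem_of_mem_canonicalGens hw) hg⟩
    rwa [← mul_assoc, hw.1.mul_self, one_mul]
  exact hg₁ (mul_eq_left.1 (Set.mem_singleton_iff.1 hinv))

lemma orderOf_div_orderOf_zpow {G : Type*} [Group G] (g : G) (e : ℤ) (hg : orderOf g ≠ 0) :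
    orderOf g / orderOf (g ^ e) = Int.gcd (orderOf g) e := by
  have hfin : IsOfFinOrder g := orderOf_pos_iff.1 (Nat.pos_of_ne_zero hg)
  have hnatAbs : orderOf (g ^ e) = orderOf (g ^ e.natAbs) := by
    obtain ⟨m, rfl | rfl⟩ := e.eq_nat_or_neg <;> simp
  rw [hnatAbs, hfin.orderOf_pow, Nat.div_div_self (Nat.gcd_dvd_left _ _) hg, Int.gcd_def,
    Int.natAbs_natCast]

lemma pow_gcd_orderOf_mem_zpowers {G : Type*} [Group G] (g : G) (e : ℤ) :
    g ^ Int.gcd (orderOf g) e ∈ Subgroup.zpowers (g ^ e) := by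
  rw [← zpow_natCast, Int.gcd_eq_gcd_ab, zpow_add, zpow_mul, zpow_mul, zpow_natCast,
    pow_orderOf_eq_one, one_zpow, one_mul]
  exact zpow_mem (Subgroup.mem_zpowers _) _

lemma length_le_two_mul_of_mem_canonicalGens {s t : B} (hdih : ∀ i : B, i = s ∨ i = t)
    {W' : Subgroup W} {w : W} (hw : w ∈ canonicalGens cs (W' : Set W)) {d : ℕ}
    (hmem : rotation cs s t ^ d ∈ W') (hne : rotation cs s t ^ d ≠ 1) : cs.length w ≤ 2 * d := by
  obtain ⟨n, hn, -⟩ := exists_eq_rotation_zpow_mul_simple cs hdih hw.1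
  have hrefl : cs.IsReflection (w * rotation cs s t ^ d) := by
    rw [hn, mul_assoc, ← zpow_natCast, simple_left_mul_rotation_zpow, ← mul_assoc, ← zpow_add]
    exact isReflection_rotation_zpow_mul_simple cs s t _
  exact (length_le_of_mem_canonicalGens hw hmem hne hrefl).trans (length_rotation_pow_le cs s t d)

/- Both generators are `ρ ^ n * s` with `-d ≤ n < d`, and the difference of the two exponents is a
nonzero multiple of `d`. -/
lemma exists_mul_eq_rotation_zpow_of_mem_canonicalGens {s t : B} (hdih : ∀ i : B, i = s ∨ i = t)
    (hm : orderOf (rotation cs s t) ≠ 0) {W' : Subgroup W} {s' t' : W} (hne : s' ≠ t')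
    (hs' : s' ∈ canonicalGens cs (W' : Set W)) (ht' : t' ∈ canonicalGens cs (W' : Set W)) {d : ℕ}
    (hd : d = orderOf (rotation cs s t) / orderOf (s' * t')) :
    ∃ e : ℤ, e.natAbs = d ∧ s' * t' = rotation cs s t ^ e := by
  obtain ⟨n, hn, hn_le⟩ := exists_eq_rotation_zpow_mul_simple cs hdih hs'.1
  obtain ⟨m, hm', hm_le⟩ := exists_eq_rotation_zpow_mul_simple cs hdih ht'.1
  have hmul : s' * t' = rotation cs s t ^ (n - m) := by
    rw [hn, hm', rotation_zpow_mul_simple_mul_rotation_zpow_mul_simple]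
  rw [hmul, orderOf_div_orderOf_zpow _ _ hm] at hd
  obtain ⟨c, hc⟩ : (d : ℤ) ∣ n - m := hd ▸ Int.gcd_dvd_right _ _
  have hmem : rotation cs s t ^ d ∈ W' := by
    have hmulmem := W'.mul_mem (mem_of_mem_canonicalGens hs') (mem_of_mem_canonicalGens ht')
    rw [hmul] at hmulmem
    exact (Subgroup.zpowers_le.2 hmulmem) (hd ▸ pow_gcd_orderOf_mem_zpowers _ _)
  have hne_one : rotation cs s t ^ d ≠ 1 := fun h ↦ hne <| by
    rw [hc, zpow_mul, zpow_natCast, h, one_zpow] at hmul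
    rw [eq_inv_of_mul_eq_one_left hmul, ht'.1.inv]
  have hs'_le := length_le_two_mul_of_mem_canonicalGens hdih hs' hmem hne_one
  have ht'_le := length_le_two_mul_of_mem_canonicalGens hdih ht' hmem hne_one
  rw [abs_le] at hn_le hm_le
  have hnm : n ≠ m := by rintro rfl; exact hne (hn.trans hm'.symm)
  have hc₀ : c ≠ 0 := by rintro rfl; lia
  have hc_lt : c < 2 := by
    by_contra! h
    have := mul_le_mul_of_nonneg_left h (Int.natCast_nonneg d)
    lia
  have hc_gt : -2 < c := by
    by_contra! h
    have := mul_le_mul_of_nonneg_left h (Int.natCast_nonneg d)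
    lia
  refine ⟨n - m, ?_, hmul⟩
  obtain rfl | rfl : c = 1 ∨ c = -1 := by lia
  · simp [hc]
  · simp [hc]

/-! ### Roots and coroots of a reflection -/

lemma rep_mul_apply (R : PreRealization cs k V) (w w' : W) (u : V) :
    R.rep (w * w') u = R.rep w (R.rep w' u) := by
  rw [map_mul, Module.End.mul_apply]

lemma rep_inv_rep (R : PreRealization cs k V) (w : W) (u : V) : R.rep w⁻¹ (R.rep w u) = u := by
  rw [← rep_mul_apply, inv_mul_cancel, map_one, Module.End.one_apply]

lemma rep_rep_inv (R : PreRealization cs k V) (w : W) (u : V) : R.rep w (R.rep w⁻¹ u) = u := by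
  rw [← rep_mul_apply, mul_inv_cancel, map_one, Module.End.one_apply]

lemma dAct_rep (R : PreRealization cs k V) (w : W) (f : Module.Dual k V) (u : V) :
    dAct R w f (R.rep w u) = f u := by
  rw [dAct, LinearMap.comp_apply, rep_inv_rep]

/-- `f` and `c` are a root and a coroot for `x ∈ W`: the element `x` acts on `V` as the reflection
`u ↦ u − f(u) c`, and `f` is surjective. -/
structure IsRootPair (R : PreRealization cs k V) (x : W) (f : Module.Dual k V) (c : V) : Prop where
  rep_apply : ∀ u : V, R.rep x u = u - f u • c
  surjective : Function.Surjective f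

namespace IsRootPair

variable {R : PreRealization cs k V} {x : W} {f f' : Module.Dual k V} {c c' : V}

lemma simple (i : B) : IsRootPair R (cs.simple i) (R.root i) (R.coroot i) :=
  ⟨R.rep_simple i, R.root_surjective i⟩

lemma conj (h : IsRootPair R x f c) (w : W) :
    IsRootPair R (w * x * w⁻¹) (dAct R w f) (R.rep w c) where
  rep_apply u := by
    rw [rep_mul_apply, rep_mul_apply, h.rep_apply, map_sub, map_smul, rep_rep_inv, dAct,
      LinearMap.comp_apply]
  surjective y := by
    obtain ⟨u, rfl⟩ := h.surjective y
    exact ⟨R.rep w u, dAct_rep R w f u⟩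

lemma smul_eq_smul (h : IsRootPair R x f c) (h' : IsRootPair R x f' c') (u : V) :
    f u • c = f' u • c' :=
  sub_right_injective ((h.rep_apply u).symm.trans (h'.rep_apply u))

lemma pairing_mul_pairing_eq (h : IsRootPair R x f c) (h' : IsRootPair R x f' c')
    (g : Module.Dual k V) (u : V) : g c * f u = g c' * f' u := by
  simpa [mul_comm] using congrArg g (h.smul_eq_smul h' u)

lemma pairing_eq_zero (h : IsRootPair R x f c) (h' : IsRootPair R x f' c')
    {g : Module.Dual k V} (hg : g c' = 0) : g c = 0 := by
  obtain ⟨u, hu⟩ := h.surjective 1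
  simpa [hu, hg] using h.pairing_mul_pairing_eq h' g u

end IsRootPair

lemma isRootPair_datum {A : Set W} {wm : W → W} {rm : W → B} (hdat : IsReflectionDatum cs A wm rm)
    (R : PreRealization cs k V) {x : W} (hx : x ∈ A) :
    IsRootPair R x (datumRoot R wm rm x) (datumCoroot R wm rm x) := by
  have h := (IsRootPair.simple (R := R) (rm x)).conj (wm x)
  rwa [← (hdat x hx).1] at h

/-! ### The coroots of a dihedral group -/

section RotationCoroot

variable (R : PreRealization cs k V) (s t : B)

/-- The coroot `[n+1]_y α_s∨ − [n]_x α_t∨` of the reflection `ρ ^ n * s`, where `ρ = st` and the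
quantum numbers are evaluated at `(a_{s,t}, a_{t,s})`. -/
def rotationCoroot (n : ℤ) : V :=
  pev (cartanS R s t) (cartanS R t s) (qY (n + 1)) • R.coroot s -
    pev (cartanS R s t) (cartanS R t s) (qX n) • R.coroot t

lemma rotationCoroot_zero : rotationCoroot R s t 0 = R.coroot s := by
  simp [rotationCoroot, qX, qY, qPair, pev]

lemma rotationCoroot_neg_one : rotationCoroot R s t (-1) = R.coroot t := by
  simp [rotationCoroot, qX, qY, qPair, pev]

lemma root_left_rotationCoroot (n : ℤ) :
    R.root s (rotationCoroot R s t n) = pev (cartanS R s t) (cartanS R t s) (twY n) := by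
  have hrec := pev_qY_add_two (cartanS R s t) (cartanS R t s) (n - 1)
  rw [show n - 1 + 2 = n + 1 by ring, sub_add_cancel] at hrec
  rw [rotationCoroot, map_sub, map_smul, map_smul, R.root_coroot_eq_two, smul_eq_mul, smul_eq_mul,
    pev_twY, ← cartanS]
  linear_combination hrec

lemma root_right_rotationCoroot (n : ℤ) :
    R.root t (rotationCoroot R s t n) = pev (cartanS R s t) (cartanS R t s) (twX (n + 1)) := by
  rw [rotationCoroot, map_sub, map_smul, map_smul, R.root_coroot_eq_two, smul_eq_mul, smul_eq_mul,
    pev_twX, add_sub_cancel_right, add_assoc, one_add_one_eq_two, pev_qX_add_two, ← cartanS]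
  ring

lemma rep_rotation_rotationCoroot (n : ℤ) :
    R.rep (rotation cs s t) (rotationCoroot R s t n) = rotationCoroot R s t (n + 2) := by
  have hX := pev_qX_add_two (cartanS R s t) (cartanS R t s) n
  have hY := pev_qY_add_two (cartanS R s t) (cartanS R t s) (n + 1)
  rw [show n + 1 + 2 = n + 2 + 1 by ring, show n + 1 + 1 = n + 2 by ring] at hY
  simp only [rotationCoroot, rotation, rep_mul_apply, R.rep_simple, map_sub, map_smul,
    R.root_coroot_eq_two, smul_eq_mul, hY, hX]
  simp only [cartanS]
  module

lemma rep_rotation_zpow_rotationCoroot (j n : ℤ) :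
    R.rep (rotation cs s t ^ j) (rotationCoroot R s t n) = rotationCoroot R s t (n + 2 * j) := by
  induction j using Int.induction_on with
  | zero => simp
  | succ j ih =>
    rw [add_comm, zpow_one_add, rep_mul_apply, ih, rep_rotation_rotationCoroot]
    congr 1
    ring
  | pred j ih =>
    rw [show -(j : ℤ) - 1 = -1 + -j by ring, zpow_add, zpow_neg_one, rep_mul_apply, ih,
      show n + 2 * -(j : ℤ) = n + 2 * (-1 + -j) + 2 by ring, ← rep_rotation_rotationCoroot,
      rep_inv_rep]

lemma dAct_rotation_zpow_rotationCoroot (f : Module.Dual k V) (j n : ℤ) :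
    dAct R (rotation cs s t ^ j) f (rotationCoroot R s t n) =
      f (rotationCoroot R s t (n - 2 * j)) := by
  rw [dAct, LinearMap.comp_apply, ← zpow_neg, rep_rotation_zpow_rotationCoroot, mul_neg,
    ← sub_eq_add_neg]

lemma isRootPair_rotationCoroot_two_mul (j : ℤ) :
    IsRootPair R (rotation cs s t ^ (2 * j) * cs.simple s)
      (dAct R (rotation cs s t ^ j) (R.root s)) (rotationCoroot R s t (2 * j)) := by
  have h := (IsRootPair.simple (R := R) s).conj (rotation cs s t ^ j)
  rwa [← rotationCoroot_zero R s t, rep_rotation_zpow_rotationCoroot, zero_add,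
    ← rotation_zpow_two_mul_mul_simple] at h

lemma isRootPair_rotationCoroot_two_mul_sub_one (j : ℤ) :
    IsRootPair R (rotation cs s t ^ (2 * j - 1) * cs.simple s)
      (dAct R (rotation cs s t ^ j) (R.root t)) (rotationCoroot R s t (2 * j - 1)) := by
  have h := (IsRootPair.simple (R := R) t).conj (rotation cs s t ^ j)
  rwa [← rotationCoroot_neg_one R s t, rep_rotation_zpow_rotationCoroot, neg_add_eq_sub,
    ← rotation_zpow_two_mul_sub_one_mul_simple] at h

lemma exists_isRootPair_rotation_zpow_mul_simple_left (e : ℤ) :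
    ∃ f c, IsRootPair R (rotation cs s t ^ e * cs.simple s) f c ∧
      R.root s c = pev (cartanS R s t) (cartanS R t s) (twY e) ∧
      f (R.coroot s) = pev (cartanS R s t) (cartanS R t s) (twX e) := by
  obtain ⟨j, hj⟩ := e.even_or_odd'
  obtain rfl | rfl : e = 2 * j ∨ e = 2 * (j + 1) - 1 := by lia
  · refine ⟨_, _, isRootPair_rotationCoroot_two_mul R s t j, root_left_rotationCoroot R s t _, ?_⟩
    rw [← rotationCoroot_zero R s t, dAct_rotation_zpow_rotationCoroot, root_left_rotationCoroot,
      zero_sub, twY_neg, twX_eq_twY_of_even (even_two_mul j)]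
  · refine ⟨_, _, isRootPair_rotationCoroot_two_mul_sub_one R s t (j + 1),
      root_left_rotationCoroot R s t _, ?_⟩
    rw [← rotationCoroot_zero R s t, dAct_rotation_zpow_rotationCoroot, root_right_rotationCoroot,
      ← twX_neg]
    congr 2
    ring

lemma exists_isRootPair_rotation_zpow_mul_simple_right (e : ℤ) :
    ∃ f c, IsRootPair R (rotation cs s t ^ e * cs.simple t) f c ∧
      R.root t c = pev (cartanS R s t) (cartanS R t s) (twX e) ∧
      f (R.coroot t) = pev (cartanS R s t) (cartanS R t s) (twY e) := by
  rw [rotation_zpow_mul_simple_right]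
  obtain ⟨j, hj⟩ := e.even_or_odd'
  obtain rfl | rfl : e = 2 * j ∨ e = 2 * j + 1 := hj
  · refine ⟨_, _, isRootPair_rotationCoroot_two_mul_sub_one R s t j, ?_, ?_⟩
    · rw [root_right_rotationCoroot, sub_add_cancel]
    · rw [← rotationCoroot_neg_one R s t, dAct_rotation_zpow_rotationCoroot,
        root_right_rotationCoroot, ← twX_eq_twY_of_even (even_two_mul j), ← twX_neg]
      congr 2
      ring
  · rw [add_sub_cancel_right]
    refine ⟨_, _, isRootPair_rotationCoroot_two_mul R s t j, root_right_rotationCoroot R s t _, ?_⟩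
    rw [← rotationCoroot_neg_one R s t, dAct_rotation_zpow_rotationCoroot,
      root_left_rotationCoroot, ← twY_neg]
    congr 2
    ring

end RotationCoroot

/-! ### Cartan entries of a reflection datum -/

section Cartan

variable {s t : B}

lemma exists_isRootPair_rotation_zpow_mul_simple (hdih : ∀ i : B, i = s ∨ i = t)
    (R : PreRealization cs k V) (r : B) (e : ℤ) :
    ∃ f c, IsRootPair R (rotation cs s t ^ e * cs.simple r) f c ∧
      R.root r c * f (R.coroot r) = pev (cartanS R s t) (cartanS R t s) (twX e) *
        pev (cartanS R s t) (cartanS R t s) (twY e) ∧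
      (pev (cartanS R s t) (cartanS R t s) (twX e) = 0 →
        pev (cartanS R s t) (cartanS R t s) (twY e) = 0 → R.root r c = 0) := by
  rcases hdih r with rfl | rfl
  · obtain ⟨f, c, h, hroot, hcoroot⟩ := exists_isRootPair_rotation_zpow_mul_simple_left R r t e
    exact ⟨f, c, h, by rw [hroot, hcoroot, mul_comm], fun _ hY ↦ hroot.trans hY⟩
  · obtain ⟨f, c, h, hroot, hcoroot⟩ := exists_isRootPair_rotation_zpow_mul_simple_right R s r e
    exact ⟨f, c, h, by rw [hroot, hcoroot], fun hX _ ↦ hroot.trans hX⟩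

variable {A : Set W} {wm : W → W} {rm : W → B} {s' t' : W} {e : ℤ}

lemma exists_conj_rotation_zpow_mul_simple_eq (hdih : ∀ i : B, i = s ∨ i = t)
    (hdat : IsReflectionDatum cs A wm rm) (ht' : t' ∈ A) (hmul : s' * t' = rotation cs s t ^ e) :
    ∃ e' : ℤ, e'.natAbs = e.natAbs ∧
      wm t' * (rotation cs s t ^ e' * cs.simple (rm t')) * (wm t')⁻¹ = s' := by
  have hconj : wm t' * ((wm t')⁻¹ * rotation cs s t ^ e * wm t' * cs.simple (rm t')) * (wm t')⁻¹ =
      s' := by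
    have hinv : t' = wm t' * cs.simple (rm t') * (wm t')⁻¹ := (hdat t' ht').1
    calc _ = s' * t' * (wm t' * cs.simple (rm t') * (wm t')⁻¹) := by rw [hmul]; group
      _ = s' * t' * t' := by rw [← hinv]
      _ = s' := by rw [mul_assoc, (show cs.IsReflection t' from ⟨_, _, hinv⟩).mul_self, mul_one]
  rcases conj_rotation_zpow_eq_or cs hdih (wm t') e with h | h
  · exact ⟨e, rfl, by rwa [h] at hconj⟩
  · exact ⟨-e, e.natAbs_neg, by rwa [h] at hconj⟩

/- Conjugating by `w_{t'}` transports the root pair of `ρ ^ (±e) r_{t'}` to one of `s'`. -/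
lemma exists_isRootPair_of_mul_eq_rotation_zpow (hdih : ∀ i : B, i = s ∨ i = t)
    (hdat : IsReflectionDatum cs A wm rm) (R : PreRealization cs k V) (ht' : t' ∈ A)
    (hmul : s' * t' = rotation cs s t ^ e) :
    ∃ f c, IsRootPair R s' f c ∧
      datumRoot R wm rm t' c * f (datumCoroot R wm rm t') =
        pev (cartanS R s t) (cartanS R t s) (twX e) *
          pev (cartanS R s t) (cartanS R t s) (twY e) ∧
      (pev (cartanS R s t) (cartanS R t s) (twX e) = 0 →
        pev (cartanS R s t) (cartanS R t s) (twY e) = 0 → datumRoot R wm rm t' c = 0) := by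
  obtain ⟨e', he', hs'⟩ := exists_conj_rotation_zpow_mul_simple_eq hdih hdat ht' hmul
  obtain ⟨f, c, h, hprod, hzero⟩ :=
    exists_isRootPair_rotation_zpow_mul_simple hdih R (rm t') e'
  refine ⟨dAct R (wm t') f, R.rep (wm t') c, hs' ▸ h.conj (wm t'), ?_⟩
  rw [datumRoot, datumCoroot, dAct_rep, dAct_rep, ← twX_natAbs e, ← twY_natAbs e, ← he', twX_natAbs,
    twY_natAbs]
  exact ⟨hprod, hzero⟩

lemma cartan_mul_cartan_eq (hdih : ∀ i : B, i = s ∨ i = t) (hdat : IsReflectionDatum cs A wm rm)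
    (R : PreRealization cs k V) (hs' : s' ∈ A) (ht' : t' ∈ A)
    (hmul : s' * t' = rotation cs s t ^ e) :
    cartan R wm rm s' t' * cartan R wm rm t' s' =
      pev (cartanS R s t) (cartanS R t s) (twX e) *
        pev (cartanS R s t) (cartanS R t s) (twY e) := by
  obtain ⟨f, c, h, hprod, -⟩ := exists_isRootPair_of_mul_eq_rotation_zpow hdih hdat R ht' hmul
  rw [← hprod]
  exact (isRootPair_datum hdat R hs').pairing_mul_pairing_eq h _ _

lemma cartan_eq_zero_of_pev_tw_eq_zero (hdih : ∀ i : B, i = s ∨ i = t)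
    (hdat : IsReflectionDatum cs A wm rm) (R : PreRealization cs k V) (hs' : s' ∈ A) (ht' : t' ∈ A)
    (hmul : s' * t' = rotation cs s t ^ e)
    (hX : pev (cartanS R s t) (cartanS R t s) (twX e) = 0)
    (hY : pev (cartanS R s t) (cartanS R t s) (twY e) = 0) : cartan R wm rm s' t' = 0 := by
  obtain ⟨f, c, h, -, hzero⟩ := exists_isRootPair_of_mul_eq_rotation_zpow hdih hdat R ht' hmul
  exact (isRootPair_datum hdat R hs').pairing_eq_zero h (hzero hX hY)

end Cartan

theorem statement_11_general [IsDomain k] (cs : CoxeterSystem M W) {s t : B}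
    (hdih : ∀ i : B, i = s ∨ i = t) (hm : orderOf (cs.simple s * cs.simple t) ≠ 0)
    (R : PreRealization cs k V) (W' : Subgroup W) {s' t' : W} (hne : s' ≠ t')
    (hs' : s' ∈ canonicalGens cs (W' : Set W)) (ht' : t' ∈ canonicalGens cs (W' : Set W))
    {wm : W → W} {rm : W → B} (hdat : IsReflectionDatum cs (canonicalGens cs (W' : Set W)) wm rm)
    {j : ℕ} (hj : j ≤ orderOf (s' * t'))
    (hvanish : pev (cartanS R s t) (cartanS R t s)
          (twist ((orderOf (cs.simple s * cs.simple t) / orderOf (s' * t') : ℕ) : ℤ)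
            (qbinomX (orderOf (s' * t')) j)) = 0 ∧
      pev (cartanS R s t) (cartanS R t s)
          (twist ((orderOf (cs.simple s * cs.simple t) / orderOf (s' * t') : ℕ) : ℤ)
            (qbinomY (orderOf (s' * t')) j)) = 0) :
    pev (cartan R wm rm s' t') (cartan R wm rm t' s') (qbinomX (orderOf (s' * t')) j) = 0 ∧
      pev (cartan R wm rm s' t') (cartan R wm rm t' s') (qbinomY (orderOf (s' * t')) j) = 0 := by
  obtain ⟨e, hd, hmul⟩ :=
    exists_mul_eq_rotation_zpow_of_mem_canonicalGens hdih hm hne hs' ht' rfl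
  rw [pev_twist, pev_twist, ← rotation, ← hd, twX_natAbs, twY_natAbs] at hvanish
  have hmul' : t' * s' = rotation cs s t ^ (-e) := by
    rw [zpow_neg, ← hmul, mul_inv_rev, hs'.1.inv, ht'.1.inv]
  refine pev_qbinom_eq_zero_of_mul_eq_mul (cartan_mul_cartan_eq hdih hdat R hs' ht' hmul)
    (fun hX hY ↦ ⟨cartan_eq_zero_of_pev_tw_eq_zero hdih hdat R hs' ht' hmul hX hY, ?_⟩)
    hj hvanish.1 hvanish.2
  rw [← twX_neg] at hX
  rw [← twY_neg] at hY
  exact cartan_eq_zero_of_pev_tw_eq_zero hdih hdat R ht' hs' hmul' hX hY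

theorem statement_11 [IsDomain k] [Module.Free k V] [Module.Finite k V]
    (cs : CoxeterSystem M W) (s t : B) (hst : s ≠ t)
    (hdih : ∀ i : B, i = s ∨ i = t)
    (hm : orderOf (cs.simple s * cs.simple t) ≠ 0)
    (R : PreRealization cs k V)
    (W' : Subgroup W) (hW' : IsReflectionSubgroup cs W')
    (s' t' : W) (hne : s' ≠ t')
    (hcan : canonicalGens cs (W' : Set W) = {s', t'})
    (hv : orderOf (s' * t') ≠ 0)
    (hdvd : orderOf (s' * t') ∣ orderOf (cs.simple s * cs.simple t))
    (hvanish : ∀ j : ℕ, 1 ≤ j → j ≤ orderOf (s' * t') - 1 →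
      pev (cartanS R s t) (cartanS R t s)
          (twist ((orderOf (cs.simple s * cs.simple t) / orderOf (s' * t') : ℕ) : ℤ)
            (qbinomX (orderOf (s' * t')) j)) = 0 ∧
      pev (cartanS R s t) (cartanS R t s)
          (twist ((orderOf (cs.simple s * cs.simple t) / orderOf (s' * t') : ℕ) : ℤ)
            (qbinomY (orderOf (s' * t')) j)) = 0) :
    ∀ (wm : W → W) (rm : W → B),
      IsReflectionDatum cs (canonicalGens cs (W' : Set W)) wm rm →
      ∀ j : ℕ, 1 ≤ j → j ≤ orderOf (s' * t') - 1 →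
        pev (cartan R wm rm s' t') (cartan R wm rm t' s')
            (qbinomX (orderOf (s' * t')) j) = 0 ∧
        pev (cartan R wm rm s' t') (cartan R wm rm t' s')
            (qbinomY (orderOf (s' * t')) j) = 0 := by
  intro wm rm hdat j hj₁ hj₂
  exact statement_11_general cs hdih hm R W' hne (by simp [hcan]) (by simp [hcan]) hdat (by lia)
    (hvanish j hj₁ hj₂)

end PaperStmt
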